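/- arXiv:1605.04993 — 3 statements merged into one kernel-verified Lean document; each statement's English description precedes it below -/
import Mathlib

section
/- Let d ≥ 1, R > 0, q' > 0, let γ̃ ∈ ℝᵈ, let σ = (σ_{jk}) be a symmetric positive semidefinite d×d real matrix, let ψ : ℝ → ℝ be an arbitrary function and h̃ : ℝᵈ → ℝ an arbitrary function. Suppose u₁, u₂ : ℝᵈ → ℝ are continuous on the closed ball B̄_R(0), twice continuously differentiable on the open ball B_R(0), vanish on the sphere {x : |x| = R}, and satisfy, for i = 1, 2 and every x ∈ B_R(0), q'·u_i(x) − (1/2)·∑_{j,k} σ_{jk} ∂²_{jk}u_i(x) − ⟨∇u_i(x), γ̃⟩ + ψ(|∇u_i(x)|²) = h̃(x). Then u₁ = u₂ on B̄_R(0). -/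
open MeasureTheory Metric
open scoped RealInnerProductSpace

/-- Second-order necessary condition: at a local maximum the Hessian is negative semidefinite. -/
theorem IsLocalMax.fderiv_fderiv_apply_self_nonpos {E : Type*} [NormedAddCommGroup E]
    [NormedSpace ℝ E] {w : E → ℝ} {x : E} (hmax : IsLocalMax w x) (hw : ContDiffAt ℝ 2 w x)
    (v : E) : fderiv ℝ (fderiv ℝ w) x v v ≤ 0 := by
  by_contra! hpos
  set ℓ : ℝ → E := fun t => x + t • v with hℓ
  have hℓ0 : ℓ 0 = x := by simp [hℓ]
  have hℓd (t : ℝ) : HasDerivAt ℓ v t := by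
    simpa [hℓ] using ((hasDerivAt_id t).smul_const v).const_add x
  have hℓt : Filter.Tendsto ℓ (nhds 0) (nhds x) := by
    simpa [hℓ0] using (hℓd 0).continuousAt.tendsto
  have hdiff : ∀ᶠ y in nhds x, DifferentiableAt ℝ w y :=
    (hw.eventually (by simp)).mono fun y hy => hy.differentiableAt (by simp)
  have hderiv : deriv (w ∘ ℓ) =ᶠ[nhds 0] fun t => fderiv ℝ w (ℓ t) v :=
    (hℓt.eventually hdiff).mono fun t ht =>
      (ht.hasFDerivAt.comp_hasDerivAt t (hℓd t)).deriv
  have hfderiv : DifferentiableAt ℝ (fderiv ℝ w) x :=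
    (hw.fderiv_right (m := 1) (by norm_num)).differentiableAt (by simp)
  have hderiv2 : deriv (deriv (w ∘ ℓ)) 0 = fderiv ℝ (fderiv ℝ w) x v v := by
    rw [hderiv.deriv_eq]
    have hcomp : HasDerivAt (fun t => fderiv ℝ w (ℓ t)) (fderiv ℝ (fderiv ℝ w) x v) 0 :=
      HasFDerivAt.comp_hasDerivAt 0 (by rw [hℓ0]; exact hfderiv.hasFDerivAt) (hℓd 0)
    simpa using (hcomp.clm_apply (hasDerivAt_const 0 v)).deriv
  have hlmax : IsLocalMax (w ∘ ℓ) 0 := by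
    simpa [IsLocalMax, IsMaxFilter, hℓ0] using hℓt.eventually hmax
  have hcont : ContinuousAt (w ∘ ℓ) 0 :=
    ContinuousAt.comp (by rw [hℓ0]; exact hw.continuousAt) (hℓd 0).continuousAt
  have hlmin : IsLocalMin (w ∘ ℓ) 0 :=
    isLocalMin_of_deriv_deriv_pos (hderiv2 ▸ hpos) hlmax.deriv_eq_zero hcont
  have hconst : (w ∘ ℓ) =ᶠ[nhds 0] fun _ => (w ∘ ℓ) 0 := by
    filter_upwards [hlmax, hlmin] with t h₁ h₂ using le_antisymm h₁ h₂
  have hzero : deriv (deriv (w ∘ ℓ)) 0 = 0 := by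
    rw [hconst.deriv.deriv_eq]
    simp
  linarith

open scoped MatrixOrder Matrix.Norms.L2Operator in
/-- The trace of a positive semidefinite matrix against a negative semidefinite bilinear form is
nonpositive. -/
theorem Matrix.PosSemidef.sum_mul_apply_single_nonpos {ι : Type*} [Fintype ι] [DecidableEq ι]
    {σ : Matrix ι ι ℝ} (hσ : σ.PosSemidef)
    (T : EuclideanSpace ℝ ι →L[ℝ] EuclideanSpace ℝ ι →L[ℝ] ℝ) (hT : ∀ v, T v v ≤ 0) :
    ∑ j, ∑ k, σ j k * T (EuclideanSpace.single j 1) (EuclideanSpace.single k 1) ≤ 0 := by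
  obtain ⟨B, rfl⟩ := CStarAlgebra.nonneg_iff_eq_star_mul_self.mp hσ.nonneg
  have hsum : ∑ j, ∑ k, (star B * B) j k *
        T (EuclideanSpace.single j 1) (EuclideanSpace.single k 1) =
      ∑ i, T (∑ j, B i j • EuclideanSpace.single j 1)
        (∑ j, B i j • EuclideanSpace.single j 1) := by
    simp only [Matrix.mul_apply, Matrix.star_apply, star_trivial, map_sum, map_smul,
      _root_.sum_apply, _root_.smul_apply, smul_eq_mul,
      Finset.sum_mul, Finset.mul_sum]
    rw [Finset.sum_comm, Finset.sum_comm_cycle]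
    exact Finset.sum_congr rfl fun i _ => Finset.sum_congr rfl fun k _ =>
      Finset.sum_congr rfl fun j _ => by ring
  rw [hsum]
  exact Finset.sum_nonpos fun i _ => hT _

/-- Comparison: solutions of the penalized equation that vanish on the sphere are ordered. -/
theorem le_of_penalized_dirichlet {d : ℕ} {R q' : ℝ} (hq' : 0 < q')
    {γ : EuclideanSpace ℝ (Fin d)} {σ : Matrix (Fin d) (Fin d) ℝ} (hσ : σ.PosSemidef)
    {ψ : ℝ → ℝ} {h' u₁ u₂ : EuclideanSpace ℝ (Fin d) → ℝ}
    (hu₁c : ContinuousOn u₁ (closedBall 0 R))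
    (hu₂c : ContinuousOn u₂ (closedBall 0 R))
    (hu₁d : ContDiffOn ℝ 2 u₁ (ball 0 R))
    (hu₂d : ContDiffOn ℝ 2 u₂ (ball 0 R))
    (hu₁b : ∀ x : EuclideanSpace ℝ (Fin d), ‖x‖ = R → u₁ x = 0)
    (hu₂b : ∀ x : EuclideanSpace ℝ (Fin d), ‖x‖ = R → u₂ x = 0)
    (heq₁ : ∀ x ∈ ball (0 : EuclideanSpace ℝ (Fin d)) R,
      q' * u₁ x
        - (1 / 2) * ∑ j, ∑ k, σ j k *
            fderiv ℝ (fun y => fderiv ℝ u₁ y (EuclideanSpace.single k 1)) x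
              (EuclideanSpace.single j 1)
        - ⟪gradient u₁ x, γ⟫ + ψ (‖gradient u₁ x‖ ^ 2) = h' x)
    (heq₂ : ∀ x ∈ ball (0 : EuclideanSpace ℝ (Fin d)) R,
      q' * u₂ x
        - (1 / 2) * ∑ j, ∑ k, σ j k *
            fderiv ℝ (fun y => fderiv ℝ u₂ y (EuclideanSpace.single k 1)) x
              (EuclideanSpace.single j 1)
        - ⟪gradient u₂ x, γ⟫ + ψ (‖gradient u₂ x‖ ^ 2) = h' x) :
    ∀ x ∈ closedBall (0 : EuclideanSpace ℝ (Fin d)) R, u₁ x ≤ u₂ x := by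
  intro z hz
  obtain ⟨x, hx, hmax⟩ :=
    (isCompact_closedBall (0 : EuclideanSpace ℝ (Fin d)) R).exists_isMaxOn ⟨z, hz⟩
      (hu₁c.sub hu₂c)
  by_contra! hlt
  have hxpos : 0 < u₁ x - u₂ x := lt_of_lt_of_le (sub_pos.mpr hlt) (hmax hz)
  have hxball : x ∈ ball (0 : EuclideanSpace ℝ (Fin d)) R := by
    rw [mem_ball_zero_iff]
    refine lt_of_le_of_ne (mem_closedBall_zero_iff.mp hx) fun hxR => ?_
    simp [hu₁b x hxR, hu₂b x hxR] at hxpos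
  have hlmax : IsLocalMax (u₁ - u₂) x :=
    hmax.isLocalMax (Filter.mem_of_superset (isOpen_ball.mem_nhds hxball) ball_subset_closedBall)
  have hd₁ : ContDiffAt ℝ 2 u₁ x := hu₁d.contDiffAt (isOpen_ball.mem_nhds hxball)
  have hd₂ : ContDiffAt ℝ 2 u₂ x := hu₂d.contDiffAt (isOpen_ball.mem_nhds hxball)
  have hdiff {u : EuclideanSpace ℝ (Fin d) → ℝ} (hu : ContDiffAt ℝ 2 u x) :
      ∀ᶠ y in nhds x, DifferentiableAt ℝ u y :=
    (hu.eventually (by simp)).mono fun y hy => hy.differentiableAt (by simp)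
  have hfderiv {u : EuclideanSpace ℝ (Fin d) → ℝ} (hu : ContDiffAt ℝ 2 u x) :
      DifferentiableAt ℝ (fderiv ℝ u) x :=
    (hu.fderiv_right (m := 1) (by norm_num)).differentiableAt (by simp)
  have hpartial {u : EuclideanSpace ℝ (Fin d) → ℝ} (hu : ContDiffAt ℝ 2 u x)
      (v w : EuclideanSpace ℝ (Fin d)) :
      fderiv ℝ (fun y => fderiv ℝ u y w) x v = fderiv ℝ (fderiv ℝ u) x v w := by
    rw [fderiv_clm_apply (hfderiv hu) (differentiableAt_const w)]
    simp
  have hsub : fderiv ℝ (u₁ - u₂) =ᶠ[nhds x] fderiv ℝ u₁ - fderiv ℝ u₂ := by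
    filter_upwards [hdiff hd₁, hdiff hd₂] with y h₁ h₂ using fderiv_sub h₁ h₂
  have hgrad : gradient u₁ x = gradient u₂ x := by
    have hzero := hsub.self_of_nhds
    rw [hlmax.fderiv_eq_zero, Pi.sub_apply] at hzero
    rw [gradient, gradient, sub_eq_zero.mp hzero.symm]
  have htrace := hσ.sum_mul_apply_single_nonpos _
    (hlmax.fderiv_fderiv_apply_self_nonpos (hd₁.sub hd₂))
  rw [hsub.fderiv_eq, fderiv_sub (hfderiv hd₁) (hfderiv hd₂)] at htrace
  simp only [_root_.sub_apply, mul_sub, Finset.sum_sub_distrib] at htrace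
  have e₁ := heq₁ x hxball
  have e₂ := heq₂ x hxball
  simp only [hpartial hd₁] at e₁
  simp only [hpartial hd₂] at e₂
  rw [hgrad] at e₁
  nlinarith [mul_pos hq' hxpos]

/-- Uniqueness for the penalized non-linear Dirichlet problem
`q'u − (1/2)tr(σD²u) − ⟨∇u, γ̃⟩ + ψ(|∇u|²) = h̃` in `B_R(0)`, `u = 0` on `∂B_R(0)`. -/
theorem uniqueness_penalized_dirichlet
    (d : ℕ) (hd : 1 ≤ d) (R : ℝ) (hR : 0 < R) (q' : ℝ) (hq' : 0 < q')
    (γ : EuclideanSpace ℝ (Fin d)) (σ : Matrix (Fin d) (Fin d) ℝ)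
    (hσ : σ.PosSemidef)
    (ψ : ℝ → ℝ) (h' : EuclideanSpace ℝ (Fin d) → ℝ)
    (u₁ u₂ : EuclideanSpace ℝ (Fin d) → ℝ)
    (hu₁c : ContinuousOn u₁ (closedBall 0 R))
    (hu₂c : ContinuousOn u₂ (closedBall 0 R))
    (hu₁d : ContDiffOn ℝ 2 u₁ (ball 0 R))
    (hu₂d : ContDiffOn ℝ 2 u₂ (ball 0 R))
    (hu₁b : ∀ x : EuclideanSpace ℝ (Fin d), ‖x‖ = R → u₁ x = 0)
    (hu₂b : ∀ x : EuclideanSpace ℝ (Fin d), ‖x‖ = R → u₂ x = 0)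
    (heq₁ : ∀ x ∈ ball (0 : EuclideanSpace ℝ (Fin d)) R,
      q' * u₁ x
        - (1 / 2) * ∑ j, ∑ k, σ j k *
            fderiv ℝ (fun y => fderiv ℝ u₁ y (EuclideanSpace.single k 1)) x
              (EuclideanSpace.single j 1)
        - ⟪gradient u₁ x, γ⟫ + ψ (‖gradient u₁ x‖ ^ 2) = h' x)
    (heq₂ : ∀ x ∈ ball (0 : EuclideanSpace ℝ (Fin d)) R,
      q' * u₂ x
        - (1 / 2) * ∑ j, ∑ k, σ j k *
            fderiv ℝ (fun y => fderiv ℝ u₂ y (EuclideanSpace.single k 1)) x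
              (EuclideanSpace.single j 1)
        - ⟪gradient u₂ x, γ⟫ + ψ (‖gradient u₂ x‖ ^ 2) = h' x) :
    Set.EqOn u₁ u₂ (closedBall 0 R) := by
  exact fun x hx => le_antisymm
    (le_of_penalized_dirichlet hq' hσ hu₁c hu₂c hu₁d hu₂d hu₁b hu₂b heq₁ heq₂ x hx)
    (le_of_penalized_dirichlet hq' hσ hu₂c hu₁c hu₂d hu₁d hu₂b hu₁b heq₂ heq₁ x hx)
end

section
/- Let d ≥ 1, R > 0, q > 0, C₀ > 0, θ > 0, let γ ∈ ℝᵈ, let σ = (σ_{ij}) be a symmetric d×d real matrix with θ|ζ|² ≤ ⟨σζ, ζ⟩ for all ζ ∈ ℝᵈ, let ν be a finite Borel measure on ℝᵈ with ν({0}) = 0, ν₀ := ν(ℝᵈ) < ∞ and ν₁ := ∫_{ℝᵈ} |z| dν(z) < ∞, and let M ≥ 0. Then there exists K₀ > 0 such that for every K ≥ K₀ and every bounded measurable G : ℝᵈ → ℝ with |G(x)| ≤ M for all x, the function η₁ defined by η₁(x) = e^{K R²} − e^{K |x|²} for |x| < R and η₁(x) = G(x) for |x| ≥ R satisfies, for every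 x ∈ B_R(0): q·η₁(x) − (1/2)·∑_{i,j} σ_{ij} ∂²_{ij}η₁(x) − ⟨∇η₁(x), γ⟩ − ∫_{ℝᵈ} ( η₁(x+z) − η₁(x) − ⟨∇η₁(x), z⟩ ) dν(z) ≥ C₀·(1 + |x|²), where for x ∈ B_R(0) the gradient and Hessian of η₁ are those of the smooth formula x ↦ e^{K R²} − e^{K |x|²}, namely ∇η₁(x) = −2Ke^{K|x|²} x and ∂²_{ij}η₁(x) = −2Ke^{K|x|²}(δ_{ij} + 2K x_i x_j). -/
open MeasureTheory Metric
open scoped RealInnerProductSpace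

/-- The first-order convexity inequality for `y ↦ exp (K * ‖y‖ ^ 2)` with `0 ≤ K`. -/
lemma exp_mul_norm_sq_add_ge {E : Type*} [NormedAddCommGroup E] [InnerProductSpace ℝ E]
    {K : ℝ} (hK : 0 ≤ K) (x z : E) :
    Real.exp (K * ‖x‖ ^ 2) + 2 * K * Real.exp (K * ‖x‖ ^ 2) * ⟪x, z⟫
      ≤ Real.exp (K * ‖x + z‖ ^ 2) := by
  have hsplit : K * ‖x + z‖ ^ 2 = K * ‖x‖ ^ 2 + K * (2 * ⟪x, z⟫ + ‖z‖ ^ 2) := by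
    rw [norm_add_sq_real]; ring
  rw [hsplit, Real.exp_add]
  have hexp := Real.add_one_le_exp (K * (2 * ⟪x, z⟫ + ‖z‖ ^ 2))
  have hz : 0 ≤ K * ‖z‖ ^ 2 := by positivity
  calc _ = Real.exp (K * ‖x‖ ^ 2) * (1 + 2 * K * ⟪x, z⟫) := by ring
    _ ≤ _ := by gcongr; linarith

/-- A uniformly elliptic matrix of positive size has trace at least its ellipticity constant. -/
lemma le_trace_of_elliptic {d : ℕ} (hd : 1 ≤ d) {θ : ℝ} (hθ : 0 < θ)
    {σ : Matrix (Fin d) (Fin d) ℝ}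
    (hell : ∀ ζ : Fin d → ℝ, θ * (∑ i, ζ i ^ 2) ≤ ∑ i, ∑ j, σ i j * ζ i * ζ j) :
    θ ≤ ∑ i, σ i i := by
  have hdiag (i : Fin d) : θ ≤ σ i i := by
    simpa [Pi.single_apply] using hell (Pi.single i 1)
  calc θ = 1 * θ := (one_mul θ).symm
    _ ≤ d * θ := by gcongr; exact_mod_cast hd
    _ = ∑ _i : Fin d, θ := by simp
    _ ≤ _ := Finset.sum_le_sum fun i _ => hdiag i

/-- An integral is at most the integral of an integrable nonnegative upper bound, whether or not
the integrand is integrable. -/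
lemma integral_le_of_le_of_nonneg {α : Type*} [MeasurableSpace α] {μ : Measure α} {f g : α → ℝ}
    (hg : Integrable g μ) (hg0 : ∀ a, 0 ≤ g a) (hfg : ∀ a, f a ≤ g a) :
    ∫ a, f a ∂μ ≤ ∫ a, g a ∂μ := by
  by_cases hf : Integrable f μ
  · exact integral_mono hf hg hfg
  · rw [integral_undef hf]
    exact integral_nonneg hg0

/-- The second-order term of the operator applied to the barrier, split into trace and
quadratic form. -/
lemma sum_mul_barrier_hessian {d : ℕ} (σ : Matrix (Fin d) (Fin d) ℝ) (c K : ℝ) (x : Fin d → ℝ) :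
    ∑ i, ∑ j, σ i j * (c * ((if i = j then (1 : ℝ) else 0) + 2 * K * x i * x j))
      = c * (∑ i, σ i i + 2 * K * ∑ i, ∑ j, σ i j * x i * x j) := by
  have hterm (i j : Fin d) :
      σ i j * (c * ((if i = j then (1 : ℝ) else 0) + 2 * K * x i * x j))
        = c * (if i = j then σ i j else 0) + c * (2 * K) * (σ i j * x i * x j) := by
    split_ifs <;> ring
  simp_rw [hterm, Finset.sum_add_distrib, ← Finset.mul_sum]
  simp
  ring

/-- The nonlocal increment of the glued barrier is bounded by an affine function of `‖z‖`. -/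
lemma barrier_increment_le {E : Type*} [NormedAddCommGroup E] [InnerProductSpace ℝ E]
    {K R M : ℝ} (hK : 0 ≤ K) (hM : 0 ≤ M) {G : E → ℝ} (hG : ∀ y, |G y| ≤ M)
    {x : E} (hx : ‖x‖ < R) (z : E) :
    (if ‖x + z‖ < R then Real.exp (K * R ^ 2) - Real.exp (K * ‖x + z‖ ^ 2) else G (x + z))
        - (Real.exp (K * R ^ 2) - Real.exp (K * ‖x‖ ^ 2))
        - ⟪(-(2 * K * Real.exp (K * ‖x‖ ^ 2))) • x, z⟫
      ≤ M + 2 * K * Real.exp (K * ‖x‖ ^ 2) * ‖x‖ * ‖z‖ := by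
  rw [real_inner_smul_left]
  split_ifs
  · have hconv := exp_mul_norm_sq_add_ge hK x z
    have : 0 ≤ 2 * K * Real.exp (K * ‖x‖ ^ 2) * ‖x‖ * ‖z‖ := by positivity
    linarith
  · have hGz := (abs_le.1 (hG (x + z))).2
    have hle : Real.exp (K * ‖x‖ ^ 2) ≤ Real.exp (K * R ^ 2) := by gcongr
    have hinner : 2 * K * Real.exp (K * ‖x‖ ^ 2) * ⟪x, z⟫
        ≤ 2 * K * Real.exp (K * ‖x‖ ^ 2) * (‖x‖ * ‖z‖) := by
      gcongr
      exact real_inner_le_norm x z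
    linarith

/-- Barrier (supersolution) construction: the function `e^{KR²} − e^{K|x|²}`, glued outside
the ball to any uniformly bounded function `G`, is a supersolution of the integro-differential
operator for `K` large enough.  Inside the ball the gradient and Hessian are those of the
smooth formula, namely `∇η₁(x) = −2Ke^{K|x|²}x` and
`∂²ᵢⱼη₁(x) = −2Ke^{K|x|²}(δᵢⱼ + 2K xᵢ xⱼ)`. -/
theorem barrier_supersolution
    (d : ℕ) (hd : 1 ≤ d) (R q C₀ θ : ℝ) (hR : 0 < R) (hq : 0 < q) (hC₀ : 0 < C₀) (hθ : 0 < θ)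
    (γ : EuclideanSpace ℝ (Fin d)) (σ : Matrix (Fin d) (Fin d) ℝ) (hσsym : σ.IsSymm)
    (hell : ∀ ζ : Fin d → ℝ, θ * (∑ i, ζ i ^ 2) ≤ ∑ i, ∑ j, σ i j * ζ i * ζ j)
    (ν : Measure (EuclideanSpace ℝ (Fin d))) [IsFiniteMeasure ν]
    (hν00 : ν {0} = 0) (hν1 : Integrable (fun z => ‖z‖) ν)
    (M : ℝ) (hM : 0 ≤ M) :
    ∃ K₀ > (0 : ℝ), ∀ K ≥ K₀, ∀ G : EuclideanSpace ℝ (Fin d) → ℝ,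
      Measurable G → (∀ x, |G x| ≤ M) →
      let η₁ : EuclideanSpace ℝ (Fin d) → ℝ := fun y =>
        if ‖y‖ < R then Real.exp (K * R ^ 2) - Real.exp (K * ‖y‖ ^ 2) else G y
      ∀ x ∈ ball (0 : EuclideanSpace ℝ (Fin d)) R,
        C₀ * (1 + ‖x‖ ^ 2) ≤
          q * η₁ x
            - (1 / 2) * ∑ i, ∑ j, σ i j *
                (-(2 * K * Real.exp (K * ‖x‖ ^ 2)) *
                  ((if i = j then (1 : ℝ) else 0) + 2 * K * x i * x j))
            - ⟪(-(2 * K * Real.exp (K * ‖x‖ ^ 2))) • x, γ⟫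
            - ∫ z, (η₁ (x + z) - η₁ x -
                ⟪(-(2 * K * Real.exp (K * ‖x‖ ^ 2))) • x, z⟫) ∂ν := by
  set a : ℝ := ‖γ‖ + ∫ z, ‖z‖ ∂ν with ha
  set B : ℝ := C₀ * (1 + R ^ 2) + M * ν.real Set.univ with hB
  have hB0 : 0 < B := by positivity
  refine ⟨a ^ 2 / θ ^ 2 + 2 * B / θ, by positivity, ?_⟩
  intro K hK G _ hG η₁ x hx
  have hxR : ‖x‖ < R := by simpa using hx
  have hKa : a ^ 2 ≤ K * θ ^ 2 := by
    rw [← div_le_iff₀ (by positivity)]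
    have : 0 < 2 * B / θ := by positivity
    linarith
  have hKB : B ≤ K * (θ / 2) := by
    have h1 : 2 * B / θ ≤ K := by
      have : 0 ≤ a ^ 2 / θ ^ 2 := by positivity
      linarith
    rw [div_le_iff₀ hθ] at h1
    linarith
  have hK0 : 0 < K := pos_of_mul_pos_left (hB0.trans_le hKB) (by positivity)
  have hηx : η₁ x = Real.exp (K * R ^ 2) - Real.exp (K * ‖x‖ ^ 2) := if_pos hxR
  have hle : Real.exp (K * ‖x‖ ^ 2) ≤ Real.exp (K * R ^ 2) := by gcongr
  have hint : ∫ z, (η₁ (x + z) - η₁ x -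
        ⟪(-(2 * K * Real.exp (K * ‖x‖ ^ 2))) • x, z⟫) ∂ν
      ≤ M * ν.real Set.univ + 2 * K * Real.exp (K * ‖x‖ ^ 2) * ‖x‖ * ∫ z, ‖z‖ ∂ν := by
    have hlin : Integrable (fun z => 2 * K * Real.exp (K * ‖x‖ ^ 2) * ‖x‖ * ‖z‖) ν :=
      hν1.const_mul _
    refine (integral_le_of_le_of_nonneg ((integrable_const M).add hlin)
      (fun z => by simp only [Pi.add_apply]; positivity) fun z => ?_).trans_eq ?_
    · rw [hηx]
      exact barrier_increment_le hK0.le hM hG hxR z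
    · simp only [Pi.add_apply]
      rw [integral_add (integrable_const M) hlin, integral_const_mul, integral_const, smul_eq_mul,
        mul_comm M]
  have htrace := le_trace_of_elliptic hd hθ hell
  have hquad : θ * ‖x‖ ^ 2 ≤ ∑ i, ∑ j, σ i j * x i * x j := by
    simpa [EuclideanSpace.real_norm_sq_eq] using hell x
  have hγ : -(‖x‖ * ‖γ‖) ≤ ⟪x, γ⟫ := (abs_le.1 (abs_real_inner_le_norm x γ)).1
  have hdrift : θ / 2 ≤ ∑ i, σ i i + 2 * K * (∑ i, ∑ j, σ i j * x i * x j)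
      + 2 * ⟪x, γ⟫ - 2 * ‖x‖ * ∫ z, ‖z‖ ∂ν := by
    have hsq : 0 ≤ θ / 2 + 2 * K * (θ * ‖x‖ ^ 2) - 2 * ‖x‖ * a := by
      refine nonneg_of_mul_nonneg_right ?_ hθ
      have := mul_le_mul_of_nonneg_right hKa (sq_nonneg ‖x‖)
      nlinarith [sq_nonneg (θ - 2 * (a * ‖x‖))]
    have hquadK : 2 * K * (θ * ‖x‖ ^ 2) ≤ 2 * K * ∑ i, ∑ j, σ i j * x i * x j := by gcongr
    rw [ha] at hsq
    linarith
  have hmain : B ≤ K * Real.exp (K * ‖x‖ ^ 2) * (∑ i, σ i i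
      + 2 * K * (∑ i, ∑ j, σ i j * x i * x j) + 2 * ⟪x, γ⟫ - 2 * ‖x‖ * ∫ z, ‖z‖ ∂ν) := by
    have hone : 1 ≤ Real.exp (K * ‖x‖ ^ 2) := Real.one_le_exp (by positivity)
    calc B ≤ K * 1 * (θ / 2) := by linarith
      _ ≤ _ := by gcongr
  have hq0 : 0 ≤ q * η₁ x := mul_nonneg hq.le (by linarith)
  have hx2 : C₀ * (1 + ‖x‖ ^ 2) ≤ C₀ * (1 + R ^ 2) := by gcongr
  rw [sum_mul_barrier_hessian, real_inner_smul_left]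
  linarith
end

section
/- Let d ≥ 1, let k ≥ 0 be an integer, let α ∈ [0,1] and R > 0. For a set D ⊆ ℝᵈ and a function g that is k-times continuously differentiable on D, define ‖g‖_{C^{k,α}(D)} := ∑_{m=0}^{k} ( sup_{x ∈ D} ‖D^m g(x)‖ + sup_{x,y ∈ D, x ≠ y} ‖D^m g(x) − D^m g(y)‖ / |x−y|^α ), where D^m g denotes the m-th iterated Fréchet derivative. Then there exist constants b > 0 and C > 0 and a linear map E from the real vector space of all functions ℝᵈ → ℝ to itself such that for every w : ℝᵈ → ℝ that is k-times continuously differentiable on the closed ball B̄_R(0) with ‖w‖_{C^{k,α}(B̄_R(0))} < ∞: (i) E(w)(x) = w(x) for all x ∈ B̄_R(0); (ii) E(w)(x) = 0 for all x outside the compact ball B̄_{R+b/2}(0); (iii) E(w) is k-times continuously differentiable on ℝᵈ and ‖E(w)‖_{C^{k,α}(ℝᵈ)} ≤ C·‖w‖_{C^{k,α}(B̄_R(0))}. -/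
open Metric
open scoped ENNReal

/-- The `C^{k,α}` norm of `g` on a set `D`:
`∑_{m=0}^{k} ( sup_{x ∈ D} ‖D^m g(x)‖ + sup_{x ≠ y ∈ D} ‖D^m g(x) − D^m g(y)‖ / |x−y|^α )`,
valued in `ℝ≥0∞` (so that finiteness can be expressed). -/
noncomputable def holderNormOn (d k : ℕ) (α : ℝ) (D : Set (EuclideanSpace ℝ (Fin d)))
    (g : EuclideanSpace ℝ (Fin d) → ℝ) : ℝ≥0∞ :=
  ∑ m ∈ Finset.range (k + 1),
    ((⨆ x ∈ D, (‖iteratedFDerivWithin ℝ m g D x‖₊ : ℝ≥0∞)) +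
      ⨆ (x ∈ D) (y ∈ D) (_ : x ≠ y),
        (‖iteratedFDerivWithin ℝ m g D x - iteratedFDerivWithin ℝ m g D y‖₊ : ℝ≥0∞) /
          ENNReal.ofReal (‖x - y‖ ^ α))

open scoped ContDiff

section HolderBound

variable {E F G : Type*} [NormedAddCommGroup E] [NormedAddCommGroup F] [NormedAddCommGroup G]

/-- `f` is continuous on `s`, bounded by `M` there, and `α`-Hölder on `s` with constant `M`. -/
structure HolderBound (α M : ℝ) (f : E → F) (s : Set E) : Prop where
  cont : ContinuousOn f s
  bound : ∀ x ∈ s, ‖f x‖ ≤ M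
  holder : ∀ x ∈ s, ∀ y ∈ s, ‖f x - f y‖ ≤ M * ‖x - y‖ ^ α

namespace HolderBound

variable {α M M' : ℝ} {f g : E → F} {s t : Set E}

lemma mono (h : HolderBound α M f s) (hM : M ≤ M') : HolderBound α M' f s where
  cont := h.cont
  bound x hx := (h.bound x hx).trans hM
  holder x hx y hy := (h.holder x hx y hy).trans (by gcongr)

lemma congr (h : HolderBound α M f s) (hfg : Set.EqOn g f s) : HolderBound α M g s where
  cont := h.cont.congr hfg
  bound x hx := by rw [hfg hx]; exact h.bound x hx
  holder x hx y hy := by rw [hfg hx, hfg hy]; exact h.holder x hx y hy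

lemma zero (α : ℝ) (s : Set E) : HolderBound α 0 (fun _ => (0 : F)) s where
  cont := continuousOn_const
  bound x hx := by simp
  holder x hx y hy := by simp

lemma add (hf : HolderBound α M f s) (hg : HolderBound α M' g s) :
    HolderBound α (M + M') (fun x => f x + g x) s where
  cont := hf.cont.add hg.cont
  bound x hx := (norm_add_le _ _).trans (add_le_add (hf.bound x hx) (hg.bound x hx))
  holder x hx y hy := by
    rw [add_sub_add_comm, add_mul]
    exact (norm_add_le _ _).trans (add_le_add (hf.holder x hx y hy) (hg.holder x hx y hy))

lemma const_smul [NormedSpace ℝ F] (hf : HolderBound α M f s) (c : ℝ) :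
    HolderBound α (|c| * M) (fun x => c • f x) s where
  cont := hf.cont.const_smul c
  bound x hx := by
    rw [norm_smul, Real.norm_eq_abs]
    exact mul_le_mul_of_nonneg_left (hf.bound x hx) (abs_nonneg c)
  holder x hx y hy := by
    rw [← smul_sub, norm_smul, Real.norm_eq_abs, mul_assoc]
    exact mul_le_mul_of_nonneg_left (hf.holder x hx y hy) (abs_nonneg c)

lemma sum {ι : Type*} (I : Finset ι) {M : ι → ℝ} {f : ι → E → F}
    (hf : ∀ i, HolderBound α (M i) (f i) s) :
    HolderBound α (∑ i ∈ I, M i) (fun x => ∑ i ∈ I, f i x) s := by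
  classical
  induction I using Finset.induction_on with
  | empty => simpa using zero α s
  | insert i I hi ih =>
    simp only [Finset.sum_insert hi]
    exact (hf i).add ih

lemma clm_apply [NormedSpace ℝ F] [NormedSpace ℝ G] {L : E → F →L[ℝ] G}
    (hL : HolderBound α M L s) (hf : HolderBound α M' f s) (hM : 0 ≤ M) (hM' : 0 ≤ M') :
    HolderBound α (2 * M * M') (fun x => L x (f x)) s where
  cont := hL.cont.clm_apply hf.cont
  bound x hx := by
    have h : ‖L x‖ * ‖f x‖ ≤ M * M' :=
      mul_le_mul (hL.bound x hx) (hf.bound x hx) (norm_nonneg _) hM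
    have := (L x).le_opNorm (f x)
    nlinarith [mul_nonneg hM hM']
  holder x hx y hy := by
    have e : L x (f x) - L y (f y) = L x (f x - f y) + (L x - L y) (f y) := by simp
    have h1 : ‖L x (f x - f y)‖ ≤ M * (M' * ‖x - y‖ ^ α) :=
      ((L x).le_opNorm _).trans
        (mul_le_mul (hL.bound x hx) (hf.holder x hx y hy) (norm_nonneg _) hM)
    have h2 : ‖(L x - L y) (f y)‖ ≤ (M * ‖x - y‖ ^ α) * M' :=
      ((L x - L y).le_opNorm _).trans
        (mul_le_mul (hL.holder x hx y hy) (hf.bound y hy) (norm_nonneg _) (by positivity))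
    rw [e]
    refine (norm_add_le _ _).trans ((add_le_add h1 h2).trans (le_of_eq ?_))
    ring

lemma comp {φ : G → E} {u : Set G} {K : ℝ} (hf : HolderBound α M f s) (hM : 0 ≤ M)
    (hα : α ∈ Set.Icc (0 : ℝ) 1) (hφ : Set.MapsTo φ u s) (hφc : ContinuousOn φ u) (hK : 1 ≤ K)
    (hφK : ∀ x ∈ u, ∀ y ∈ u, ‖φ x - φ y‖ ≤ K * ‖x - y‖) :
    HolderBound α (K * M) (fun x => f (φ x)) u where
  cont := hf.cont.comp hφc hφ
  bound x hx := (hf.bound _ (hφ hx)).trans (le_mul_of_one_le_left hM hK)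
  holder x hx y hy := by
    refine (hf.holder _ (hφ hx) _ (hφ hy)).trans ?_
    have h1 : ‖φ x - φ y‖ ^ α ≤ K * ‖x - y‖ ^ α := by
      calc ‖φ x - φ y‖ ^ α ≤ (K * ‖x - y‖) ^ α :=
            Real.rpow_le_rpow (norm_nonneg _) (hφK x hx y hy) hα.1
        _ = K ^ α * ‖x - y‖ ^ α := Real.mul_rpow (by linarith) (norm_nonneg _)
        _ ≤ K * ‖x - y‖ ^ α := by
            gcongr
            exact (Real.rpow_le_rpow_of_exponent_le hK hα.2).trans (by simp)
    calc M * ‖φ x - φ y‖ ^ α ≤ M * (K * ‖x - y‖ ^ α) := by gcongr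
      _ = K * M * ‖x - y‖ ^ α := by ring

lemma union [NormedSpace ℝ E] (hα : 0 ≤ α) (hM : 0 ≤ M) (hs : IsClosed s) (ht : IsClosed t)
    (hconv : Convex ℝ (s ∪ t)) (hfs : HolderBound α M f s) (hft : HolderBound α M f t) :
    HolderBound α (2 * M) f (s ∪ t) := by
  have key : ∀ x ∈ s, ∀ y ∈ t, ‖f x - f y‖ ≤ 2 * M * ‖x - y‖ ^ α := by
    intro x hx y hy
    have hsub : segment ℝ x y ⊆ s ∪ t := hconv.segment_subset (Or.inl hx) (Or.inr hy)
    obtain ⟨z, hz, hzs, hzt⟩ :=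
      isPreconnected_closed_iff.1 (convex_segment (𝕜 := ℝ) x y).isPreconnected s t hs ht hsub
        ⟨x, left_mem_segment ℝ x y, hx⟩ ⟨y, right_mem_segment ℝ x y, hy⟩
    have hd : ‖x - z‖ + ‖z - y‖ = ‖x - y‖ := by
      simpa [dist_eq_norm] using dist_add_dist_of_mem_segment hz
    have h1 : ‖f x - f z‖ ≤ M * ‖x - y‖ ^ α :=
      (hfs.holder x hx z hzs).trans
        (mul_le_mul_of_nonneg_left
          (Real.rpow_le_rpow (norm_nonneg _) (by linarith [norm_nonneg (z - y)]) hα) hM)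
    have h2 : ‖f z - f y‖ ≤ M * ‖x - y‖ ^ α :=
      (hft.holder z hzt y hy).trans
        (mul_le_mul_of_nonneg_left
          (Real.rpow_le_rpow (norm_nonneg _) (by linarith [norm_nonneg (x - z)]) hα) hM)
    calc ‖f x - f y‖ = ‖(f x - f z) + (f z - f y)‖ := by simp
      _ ≤ ‖f x - f z‖ + ‖f z - f y‖ := norm_add_le _ _
      _ ≤ 2 * M * ‖x - y‖ ^ α := by linarith
  refine ⟨hfs.cont.union_of_isClosed hft.cont hs ht, ?_, ?_⟩
  · rintro x (hx | hx)
    · linarith [hfs.bound x hx]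
    · linarith [hft.bound x hx]
  · rintro x (hx | hx) y (hy | hy)
    · exact (hfs.mono (by linarith)).holder x hx y hy
    · exact key x hx y hy
    · rw [norm_sub_rev, norm_sub_rev x y]
      exact key y hy x hx
    · exact (hft.mono (by linarith)).holder x hx y hy

end HolderBound

lemma holderBound_linearIsometryEquiv_comp [NormedSpace ℝ F] [NormedSpace ℝ G] (e : F ≃ₗᵢ[ℝ] G)
    {α M : ℝ} {f : E → F} {s : Set E} :
    HolderBound α M (fun x => e (f x)) s ↔ HolderBound α M f s := by
  constructor
  · rintro ⟨h1, h2, h3⟩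
    refine ⟨(e.comp_continuousOn_iff).1 h1, by simpa using h2, ?_⟩
    simpa [← map_sub] using h3
  · rintro ⟨h1, h2, h3⟩
    refine ⟨e.continuous.comp_continuousOn h1, by simpa using h2, ?_⟩
    simpa [← map_sub] using h3

lemma ContDiff.exists_lipschitz_closedBall [NormedSpace ℝ E] [NormedSpace ℝ F]
    [FiniteDimensional ℝ E] {f : E → F} (hf : ContDiff ℝ ∞ f) (r : ℝ) :
    ∃ K ≥ (1 : ℝ), ∀ x ∈ closedBall (0 : E) r, ∀ y ∈ closedBall (0 : E) r,
      ‖f x - f y‖ ≤ K * ‖x - y‖ := by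
  have : ProperSpace E := FiniteDimensional.proper ℝ E
  obtain ⟨K, hK⟩ := (isCompact_closedBall (0 : E) r).exists_bound_of_continuousOn
    (hf.continuous_fderiv (by simp)).continuousOn
  refine ⟨max K 1, le_max_right _ _, fun x hx y hy => ?_⟩
  exact (convex_closedBall (0 : E) r).norm_image_sub_le_of_norm_fderiv_le (𝕜 := ℝ)
    (fun z _ => (hf.differentiable (by simp)) z)
    (fun z hz => (hK z hz).trans (le_max_left _ _)) hy hx

lemma ContDiff.exists_holderBound_closedBall [NormedSpace ℝ E] [NormedSpace ℝ F]
    [FiniteDimensional ℝ E] {f : E → F} (hf : ContDiff ℝ ∞ f) {α : ℝ}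
    (hα : α ∈ Set.Icc (0 : ℝ) 1) (r : ℝ) :
    ∃ M ≥ (0 : ℝ), HolderBound α M f (closedBall 0 r) := by
  have : ProperSpace E := FiniteDimensional.proper ℝ E
  obtain ⟨K, hK1, hK⟩ := hf.exists_lipschitz_closedBall r
  obtain ⟨B, hB⟩ := (isCompact_closedBall (0 : E) r).exists_bound_of_continuousOn
    hf.continuous.continuousOn
  refine ⟨max K (2 * max B 0), by positivity, hf.continuous.continuousOn, ?_, ?_⟩
  · intro x hx
    have := hB x hx
    have := le_max_right K (2 * max B 0)
    have := le_max_left B 0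
    linarith [le_max_right B 0]
  · intro x hx y hy
    rcases le_total ‖x - y‖ 1 with h | h
    · rcases eq_or_ne x y with rfl | hxy
      · simp only [sub_self, norm_zero]; positivity
      · have hpos : 0 < ‖x - y‖ := norm_pos_iff.2 (sub_ne_zero.2 hxy)
        have h1 : ‖x - y‖ ≤ ‖x - y‖ ^ α := by
          simpa using Real.rpow_le_rpow_of_exponent_ge hpos h hα.2
        calc ‖f x - f y‖ ≤ K * ‖x - y‖ := hK x hx y hy
          _ ≤ max K (2 * max B 0) * ‖x - y‖ ^ α := by
            gcongr; exact le_max_left _ _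
    · have h1 : 1 ≤ ‖x - y‖ ^ α := Real.one_le_rpow h hα.1
      have h2 := norm_sub_le (f x) (f y)
      have := hB x hx
      have := hB y hy
      have := le_max_left B 0
      calc ‖f x - f y‖ ≤ 2 * max B 0 := by linarith
        _ ≤ max K (2 * max B 0) := le_max_right _ _
        _ ≤ _ := le_mul_of_one_le_right (by positivity) h1

end HolderBound

section HolderJet

universe u

variable {E : Type u} [NormedAddCommGroup E] [NormedSpace ℝ E]

/-- `f` has `n` successive derivatives within `s`, each of which, like `f` itself,
satisfies `HolderBound α M` on `s`. -/
def HolderJet (α M : ℝ) (s : Set E) :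
    ℕ → ∀ {F : Type u} [NormedAddCommGroup F] [NormedSpace ℝ F], (E → F) → Prop
  | 0, _, _, _, f => HolderBound α M f s
  | n + 1, F, _, _, f => HolderBound α M f s ∧
      ∃ f' : E → E →L[ℝ] F, (∀ x ∈ s, HasFDerivWithinAt f (f' x) s x) ∧ HolderJet α M s n f'

namespace HolderJet

variable {F : Type u} [NormedAddCommGroup F] [NormedSpace ℝ F] {α M M' : ℝ} {s : Set E} {n : ℕ}

lemma holderBound {f : E → F} (h : HolderJet α M s n f) : HolderBound α M f s := by
  cases n with
  | zero => exact h
  | succ n => exact h.1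

lemma mono {f : E → F} (h : HolderJet α M s n f) (hM : M ≤ M') : HolderJet α M' s n f := by
  induction n generalizing F with
  | zero => exact HolderBound.mono h hM
  | succ n ih =>
    obtain ⟨h0, f', hf', h1⟩ := h
    exact ⟨h0.mono hM, f', hf', ih h1⟩

lemma add {f g : E → F} (hf : HolderJet α M s n f) (hg : HolderJet α M' s n g) :
    HolderJet α (M + M') s n (fun x => f x + g x) := by
  induction n generalizing F with
  | zero => exact HolderBound.add hf hg
  | succ n ih =>
    obtain ⟨h0, f', hf', h1⟩ := hf
    obtain ⟨k0, g', hg', k1⟩ := hg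
    exact ⟨h0.add k0, fun x => f' x + g' x, fun x hx => (hf' x hx).add (hg' x hx), ih h1 k1⟩

lemma congr {f g : E → F} (hf : HolderJet α M s n f) (hfg : Set.EqOn g f s) :
    HolderJet α M s n g := by
  cases n with
  | zero => exact HolderBound.congr hf hfg
  | succ n =>
    obtain ⟨h0, f', hf', h1⟩ := hf
    exact ⟨h0.congr hfg, f', fun x hx => (hf' x hx).congr hfg (hfg hx), h1⟩

lemma of_succ {f : E → F} (hf : HolderJet α M s (n + 1) f) : HolderJet α M s n f := by
  induction n generalizing F with
  | zero => exact hf.1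
  | succ n ih =>
    obtain ⟨h0, f', hf', h1⟩ := hf
    exact ⟨h0, f', hf', ih h1⟩

end HolderJet

lemma holderBound_iteratedFDerivWithin_succ_iff {F : Type*} [NormedAddCommGroup F]
    [NormedSpace ℝ F] {α M : ℝ} {s : Set E} (hs : UniqueDiffOn ℝ s) {f : E → F} (m : ℕ) :
    HolderBound α M (iteratedFDerivWithin ℝ (m + 1) f s) s ↔
      HolderBound α M (iteratedFDerivWithin ℝ m (fderivWithin ℝ f s) s) s := by
  refine Iff.trans ?_
    (holderBound_linearIsometryEquiv_comp (continuousMultilinearCurryRightEquiv' ℝ m E F).symm)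
  have key : Set.EqOn (iteratedFDerivWithin ℝ (m + 1) f s) (fun x =>
      (continuousMultilinearCurryRightEquiv' ℝ m E F).symm
        (iteratedFDerivWithin ℝ m (fderivWithin ℝ f s) s x)) s :=
    fun x hx => iteratedFDerivWithin_succ_eq_comp_right hs hx
  exact ⟨fun h => h.congr key.symm, fun h => h.congr key⟩

lemma holderBound_iteratedFDerivWithin_zero_iff {F : Type*} [NormedAddCommGroup F]
    [NormedSpace ℝ F] {α M : ℝ} {s : Set E} {f : E → F} :
    HolderBound α M (iteratedFDerivWithin ℝ 0 f s) s ↔ HolderBound α M f s := by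
  rw [iteratedFDerivWithin_zero_eq_comp]
  exact holderBound_linearIsometryEquiv_comp (continuousMultilinearCurryFin0 ℝ E F).symm

lemma holderJet_iff {F : Type u} [NormedAddCommGroup F] [NormedSpace ℝ F] {α M : ℝ} {s : Set E}
    (hs : UniqueDiffOn ℝ s) {n : ℕ} {f : E → F} :
    HolderJet α M s n f ↔ ContDiffOn ℝ n f s ∧
      ∀ m ≤ n, HolderBound α M (iteratedFDerivWithin ℝ m f s) s := by
  induction n generalizing F with
  | zero =>
    simp only [Nat.le_zero, forall_eq, holderBound_iteratedFDerivWithin_zero_iff, HolderJet]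
    exact ⟨fun h => ⟨contDiffOn_zero.2 h.cont, h⟩, fun h => h.2⟩
  | succ n ih =>
    constructor
    · rintro ⟨h0, f', hf', h1⟩
      have he : Set.EqOn (fderivWithin ℝ f s) f' s :=
        fun x hx => (hf' x hx).fderivWithin (hs x hx)
      obtain ⟨h2, h3⟩ := ih.1 (h1.congr he)
      refine ⟨?_, fun m hm => ?_⟩
      · push_cast
        rw [contDiffOn_succ_iff_fderivWithin hs]
        exact ⟨fun x hx => (hf' x hx).differentiableWithinAt, by simp, h2⟩
      · cases m with
        | zero => exact holderBound_iteratedFDerivWithin_zero_iff.2 h0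
        | succ m =>
          exact (holderBound_iteratedFDerivWithin_succ_iff hs m).2 (h3 m (by omega))
    · rintro ⟨h1, h2⟩
      push_cast at h1
      rw [contDiffOn_succ_iff_fderivWithin hs] at h1
      refine ⟨holderBound_iteratedFDerivWithin_zero_iff.1 (h2 0 (by omega)), fderivWithin ℝ f s,
        fun x hx => (h1.1 x hx).hasFDerivWithinAt, ih.2 ⟨h1.2.2, fun m hm => ?_⟩⟩
      exact (holderBound_iteratedFDerivWithin_succ_iff hs m).1 (h2 (m + 1) (by omega))

end HolderJet

section Reflection

/-- The closed shell between the spheres of radii `R` and `R₂`. -/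
def shell (E : Type*) [NormedAddCommGroup E] (R R₂ : ℝ) : Set E := {x | R ≤ ‖x‖ ∧ ‖x‖ ≤ R₂}

lemma closedBall_union_shell {E : Type*} [NormedAddCommGroup E] {R R₂ : ℝ} (hR : R ≤ R₂) :
    closedBall 0 R ∪ shell E R R₂ = closedBall (0 : E) R₂ := by
  ext x
  simp only [shell, Set.mem_union, mem_closedBall_zero_iff, Set.mem_ofPred_eq]
  constructor
  · rintro (h | h)
    exacts [h.trans hR, h.2]
  · intro h
    rcases le_total ‖x‖ R with h' | h'
    exacts [Or.inl h', Or.inr ⟨h', h⟩]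

lemma isClosed_shell {E : Type*} [NormedAddCommGroup E] {R R₂ : ℝ} : IsClosed (shell E R R₂) :=
  (isClosed_le continuous_const continuous_norm).inter
    (isClosed_le continuous_norm continuous_const)

universe u

variable {E : Type u} [NormedAddCommGroup E] [NormedSpace ℝ E]

/-- The summand `x ↦ c ^ i • L x (v (x - c • ψ x))` of a reflection operator with node `c`. -/
def reflTerm {F G : Type*} [NormedAddCommGroup F] [NormedSpace ℝ F] [NormedAddCommGroup G]
    [NormedSpace ℝ G] (ψ : E → E) (c : ℝ) (L : E → F →L[ℝ] G) (i : ℕ) (v : E → F) (x : E) : G :=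
  c ^ i • L x (v (x - c • ψ x))

/-- Coefficient of `v` in the derivative of a `reflTerm` with coefficient `L`. -/
noncomputable def derivCoeff {F G : Type*} [NormedAddCommGroup F] [NormedSpace ℝ F]
    [NormedAddCommGroup G] [NormedSpace ℝ G] (L : E → F →L[ℝ] G) (x : E) : F →L[ℝ] E →L[ℝ] G :=
  (fderiv ℝ L x).flip

/-- Coefficient of the derivative of `v`, at the same power of the node, in the derivative of
a `reflTerm` with coefficient `L`. -/
noncomputable def postcompCoeff {F G : Type*} [NormedAddCommGroup F] [NormedSpace ℝ F]
    [NormedAddCommGroup G] [NormedSpace ℝ G] (L : E → F →L[ℝ] G) (x : E) :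
    (E →L[ℝ] F) →L[ℝ] E →L[ℝ] G :=
  ContinuousLinearMap.compL ℝ E F G (L x)

/-- Coefficient of the derivative of `v`, at the next power of the node, in the derivative of
a `reflTerm` with coefficient `L`. -/
noncomputable def reflectCoeff {F G : Type*} [NormedAddCommGroup F] [NormedSpace ℝ F]
    [NormedAddCommGroup G] [NormedSpace ℝ G] (ψ : E → E) (L : E → F →L[ℝ] G) (x : E) :
    (E →L[ℝ] F) →L[ℝ] E →L[ℝ] G :=
  -(ContinuousLinearMap.compL ℝ E F G (L x)).comp
    ((ContinuousLinearMap.compL ℝ E E F).flip (fderiv ℝ ψ x))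

section Coeff

variable {F G : Type*} [NormedAddCommGroup F] [NormedSpace ℝ F] [NormedAddCommGroup G]
  [NormedSpace ℝ G] {ψ : E → E} {L : E → F →L[ℝ] G}

lemma ContDiff.derivCoeff (hL : ContDiff ℝ ∞ L) : ContDiff ℝ ∞ (derivCoeff L) := by
  have hflip := LinearIsometryEquiv.contDiff (𝕜 := ℝ) (n := ∞) (E := E →L[ℝ] F →L[ℝ] G)
    (F := F →L[ℝ] E →L[ℝ] G) (ContinuousLinearMap.flipₗᵢ ℝ E F G)
  exact hflip.comp (hL.fderiv_right (m := ∞) (by simp))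

lemma ContDiff.postcompCoeff (hL : ContDiff ℝ ∞ L) : ContDiff ℝ ∞ (postcompCoeff L) :=
  contDiff_const.clm_apply hL

lemma ContDiff.reflectCoeff (hψ : ContDiff ℝ ∞ ψ) (hL : ContDiff ℝ ∞ L) :
    ContDiff ℝ ∞ (reflectCoeff ψ L) :=
  (hL.postcompCoeff.clm_comp
    (contDiff_const.clm_apply (hψ.fderiv_right (m := ∞) (by simp)))).neg

lemma derivCoeff_eq_zero {r : ℝ} (hL : ∀ x, r < ‖x‖ → L x = 0) :
    ∀ x, r < ‖x‖ → derivCoeff L x = 0 := by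
  intro x hx
  have h : L =ᶠ[nhds x] fun _ => 0 := by
    filter_upwards [continuous_norm.continuousAt.eventually (lt_mem_nhds hx)] with y hy
    exact hL y hy
  simp [derivCoeff, h.fderiv_eq]

lemma postcompCoeff_eq_zero {x : E} (hL : L x = 0) : postcompCoeff L x = 0 := by
  simp [postcompCoeff, hL]

lemma reflectCoeff_eq_zero {x : E} (hL : L x = 0) : reflectCoeff ψ L x = 0 := by
  simp [reflectCoeff, hL]

lemma reflTerm_eq_zero {c : ℝ} {i : ℕ} {v : E → F} {x : E} (hL : L x = 0) :
    reflTerm ψ c L i v x = 0 := by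
  simp [reflTerm, hL]

lemma hasFDerivWithinAt_reflTerm (hψ : ContDiff ℝ ∞ ψ) (hL : ContDiff ℝ ∞ L) {c : ℝ} {s t : Set E}
    (hmaps : Set.MapsTo (fun x => x - c • ψ x) s t) {v : E → F} {v' : E → E →L[ℝ] F}
    (hv : ∀ x ∈ t, HasFDerivWithinAt v (v' x) t x) (i : ℕ) {x : E} (hx : x ∈ s) :
    HasFDerivWithinAt (reflTerm ψ c L i v)
      (reflTerm ψ c (derivCoeff L) i v x + reflTerm ψ c (postcompCoeff L) i v' x +
        reflTerm ψ c (reflectCoeff ψ L) (i + 1) v' x) s x := by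
  have hφ : HasFDerivWithinAt (fun x => x - c • ψ x)
      (ContinuousLinearMap.id ℝ E - c • fderiv ℝ ψ x) s x :=
    ((hasFDerivAt_id x).sub
      (((hψ.differentiable (by simp)) x).hasFDerivAt.const_smul c)).hasFDerivWithinAt
  have hL' : HasFDerivWithinAt L (fderiv ℝ L x) s x :=
    ((hL.differentiable (by simp)) x).hasFDerivAt.hasFDerivWithinAt
  have hcomp := (hv _ (hmaps hx)).comp x hφ hmaps
  refine ((hL'.clm_apply hcomp).const_smul (c ^ i)).congr_fderiv ?_
  ext h
  simp [reflTerm, derivCoeff, postcompCoeff, reflectCoeff, pow_succ, smul_smul, smul_sub,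
    smul_add]
  abel

lemma exists_holderBound_reflTerm [FiniteDimensional ℝ E] {α : ℝ} (hα : α ∈ Set.Icc (0 : ℝ) 1)
    (hψ : ContDiff ℝ ∞ ψ) (hL : ContDiff ℝ ∞ L) {c r : ℝ} {s t : Set E}
    (hs : s ⊆ closedBall 0 r) (hmaps : Set.MapsTo (fun x => x - c • ψ x) s t) (i : ℕ) :
    ∃ C ≥ (0 : ℝ), ∀ (v : E → F) (M : ℝ), 0 ≤ M → HolderBound α M v t →
      HolderBound α (C * M) (reflTerm ψ c L i v) s := by
  have hφ : ContDiff ℝ ∞ (fun x => x - c • ψ x) := contDiff_id.sub (hψ.const_smul c)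
  obtain ⟨K, hK1, hK⟩ := hφ.exists_lipschitz_closedBall r
  obtain ⟨B, hB0, hB⟩ := hL.exists_holderBound_closedBall hα r
  have hBs : HolderBound α B L s :=
    ⟨hB.cont.mono hs, fun x hx => hB.bound x (hs hx),
      fun x hx y hy => hB.holder x (hs hx) y (hs hy)⟩
  refine ⟨|c ^ i| * (2 * B * K), by positivity, fun v M hM hv => ?_⟩
  have h := (hBs.clm_apply (hv.comp hM hα hmaps hφ.continuous.continuousOn hK1
    fun x hx y hy => hK x (hs hx) y (hs hy)) hB0 (by positivity)).const_smul (c ^ i)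
  exact h.mono (le_of_eq (by ring))

end Coeff

/-- Data of a higher-order reflection across the sphere of radius `R`: the maps
`x ↦ x - node j • ψ x` fix the sphere and send the shell `R ≤ ‖x‖ ≤ R₂` into the closed ball,
and the weights extrapolate polynomials of degree at most `k` from the nodes to `0`. -/
structure SphereReflection (E : Type*) [NormedAddCommGroup E] [NormedSpace ℝ E] (k : ℕ)
    (R R₂ : ℝ) where
  ψ : E → E
  node : Fin (k + 1) → ℝ
  weight : Fin (k + 1) → ℝ
  contDiff : ContDiff ℝ ∞ ψ
  eq_zero : ∀ x, ‖x‖ = R → ψ x = 0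
  mapsTo : ∀ j x, R ≤ ‖x‖ → ‖x‖ ≤ R₂ → ‖x - node j • ψ x‖ ≤ R
  sum_weight : ∀ i ≤ k, ∑ j, weight j * node j ^ i = 0 ^ i

namespace SphereReflection

variable {k : ℕ} {R R₂ : ℝ} (S : SphereReflection E k R R₂)

section Glue

variable {F G : Type*} [NormedAddCommGroup F] [NormedSpace ℝ F] [NormedAddCommGroup G]
  [NormedSpace ℝ G]

/-- The reflected sum used outside the ball. -/
def outer (L : E → F →L[ℝ] G) (i : ℕ) (v : E → F) (x : E) : G :=
  ∑ j, S.weight j • reflTerm S.ψ (S.node j) L i v x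

open Classical in
/-- The function equal to the term with node `0` in the closed ball of radius `R` and to the
reflected sum outside. -/
noncomputable def glue (L : E → F →L[ℝ] G) (i : ℕ) (v : E → F) (x : E) : G :=
  if ‖x‖ ≤ R then reflTerm S.ψ 0 L i v x else S.outer L i v x

variable {L : E → F →L[ℝ] G} {i : ℕ} {v : E → F}

lemma glue_eqOn_ball : Set.EqOn (S.glue L i v) (reflTerm S.ψ 0 L i v) (closedBall 0 R) := by
  intro x hx
  simp [glue, mem_closedBall_zero_iff.1 hx]

lemma glue_eq_outer (hi : i ≤ k) {x : E} (hx : R ≤ ‖x‖) : S.glue L i v x = S.outer L i v x := by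
  rcases hx.eq_or_lt with h | h
  · have h0 := S.eq_zero x h.symm
    simp [glue, h.symm.le, outer, reflTerm, h0, smul_smul, ← Finset.sum_smul, S.sum_weight i hi]
  · simp [glue, h.not_ge]

lemma glue_eq_zero {x : E} (hL : L x = 0) : S.glue L i v x = 0 := by
  simp [glue, outer, reflTerm_eq_zero hL]

lemma mapsTo_shell (j : Fin (k + 1)) :
    Set.MapsTo (fun x => x - S.node j • S.ψ x) (shell E R R₂) (closedBall 0 R) :=
  fun x hx => mem_closedBall_zero_iff.2 (S.mapsTo j x hx.1 hx.2)

lemma mapsTo_ball :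
    Set.MapsTo (fun x => x - (0 : ℝ) • S.ψ x) (closedBall 0 R) (closedBall 0 R) :=
  fun x hx => by simpa using hx

lemma exists_holderBound_glue [FiniteDimensional ℝ E] {α : ℝ} (hα : α ∈ Set.Icc (0 : ℝ) 1)
    (hR : R ≤ R₂) {R₁ : ℝ} (hR₁ : R₁ < R₂) (hL : ContDiff ℝ ∞ L)
    (hL0 : ∀ x, R₁ < ‖x‖ → L x = 0) (hi : i ≤ k) :
    ∃ C ≥ (0 : ℝ), ∀ (v : E → F) (M : ℝ), 0 ≤ M → HolderBound α M v (closedBall 0 R) →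
      HolderBound α (C * M) (S.glue L i v) Set.univ := by
  obtain ⟨C₀, hC₀, h₀⟩ := exists_holderBound_reflTerm hα S.contDiff hL subset_rfl S.mapsTo_ball i
  have hsh : shell E R R₂ ⊆ closedBall 0 R₂ := fun x hx => mem_closedBall_zero_iff.2 hx.2
  choose C hC h using fun j =>
    exists_holderBound_reflTerm hα S.contDiff hL hsh (S.mapsTo_shell j) i
  set C₁ := ∑ j, |S.weight j| * C j
  have hC₁0 : 0 ≤ C₁ := Finset.sum_nonneg fun j _ => mul_nonneg (abs_nonneg _) (hC j)
  refine ⟨2 * (2 * (C₀ + C₁)), by positivity, fun v M hM hv => ?_⟩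
  have hball : HolderBound α ((C₀ + C₁) * M) (S.glue L i v) (closedBall 0 R) :=
    ((h₀ v M hM hv).congr S.glue_eqOn_ball).mono (by gcongr; linarith)
  have hshell : HolderBound α ((C₀ + C₁) * M) (S.glue L i v) (shell E R R₂) := by
    have hsum := HolderBound.sum Finset.univ fun j => (h j v M hM hv).const_smul (S.weight j)
    refine (hsum.congr fun x hx => S.glue_eq_outer hi hx.1).mono ?_
    simp only [← mul_assoc, ← Finset.sum_mul]
    gcongr
    linarith
  have hbig := hball.union hα.1 (by positivity) isClosed_closedBall isClosed_shell
    (by rw [closedBall_union_shell hR]; exact convex_closedBall _ _) hshell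
  rw [closedBall_union_shell hR] at hbig
  have hout : HolderBound α (2 * ((C₀ + C₁) * M)) (S.glue L i v) {x | R₂ ≤ ‖x‖} :=
    ((HolderBound.zero α _).congr fun x hx =>
      S.glue_eq_zero (hL0 x (hR₁.trans_le hx))).mono (by positivity)
  have hun : closedBall (0 : E) R₂ ∪ {x | R₂ ≤ ‖x‖} = Set.univ := by
    ext x
    simpa using le_total ‖x‖ R₂
  have := hbig.union hα.1 (by positivity) isClosed_closedBall
    (isClosed_le continuous_const continuous_norm) (by rw [hun]; exact convex_univ) hout
  rw [hun] at this
  exact this.mono (le_of_eq (by ring))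

lemma hasFDerivAt_glue (hR : R ≤ R₂) {R₁ : ℝ} (hR₁ : R₁ < R₂) (hL : ContDiff ℝ ∞ L)
    (hL0 : ∀ x, R₁ < ‖x‖ → L x = 0) (hi : i + 1 ≤ k) {v' : E → E →L[ℝ] F}
    (hv : ∀ x ∈ closedBall (0 : E) R, HasFDerivWithinAt v (v' x) (closedBall 0 R) x) (x : E) :
    HasFDerivAt (S.glue L i v)
      (S.glue (derivCoeff L) i v x + S.glue (postcompCoeff L) i v' x +
        S.glue (reflectCoeff S.ψ L) (i + 1) v' x) x := by
  rcases lt_or_ge R₁ ‖x‖ with hx | hx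
  · have h0 : S.glue L i v =ᶠ[nhds x] fun _ => 0 := by
      filter_upwards [continuous_norm.continuousAt.eventually (lt_mem_nhds hx)] with y hy
      exact S.glue_eq_zero (hL0 y hy)
    rw [S.glue_eq_zero (derivCoeff_eq_zero hL0 x hx),
      S.glue_eq_zero (postcompCoeff_eq_zero (hL0 x hx)),
      S.glue_eq_zero (reflectCoeff_eq_zero (hL0 x hx))]
    simpa using (hasFDerivAt_const (0 : G) x).congr_of_eventuallyEq h0
  set D := S.glue (derivCoeff L) i v x + S.glue (postcompCoeff L) i v' x +
    S.glue (reflectCoeff S.ψ L) (i + 1) v' x with hD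
  have hball : HasFDerivWithinAt (S.glue L i v) D (closedBall 0 R) x := by
    by_cases hxb : x ∈ closedBall (0 : E) R
    · rw [hD, S.glue_eqOn_ball hxb, S.glue_eqOn_ball hxb, S.glue_eqOn_ball hxb]
      exact (hasFDerivWithinAt_reflTerm S.contDiff hL S.mapsTo_ball hv i hxb).congr
        S.glue_eqOn_ball (S.glue_eqOn_ball hxb)
    · exact .of_notMem_closure (by rwa [isClosed_closedBall.closure_eq])
  have hshell : HasFDerivWithinAt (S.glue L i v) D (shell E R R₂) x := by
    by_cases hxs : x ∈ shell E R R₂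
    · have hsum := HasFDerivWithinAt.fun_sum (u := Finset.univ) fun j _ =>
        (hasFDerivWithinAt_reflTerm S.contDiff hL (S.mapsTo_shell j) hv i hxs).const_smul
          (S.weight j)
      refine (hsum.congr (fun y hy => S.glue_eq_outer (by omega) hy.1)
        (S.glue_eq_outer (by omega) hxs.1)).congr_fderiv ?_
      rw [hD, S.glue_eq_outer (by omega) hxs.1, S.glue_eq_outer (by omega) hxs.1,
        S.glue_eq_outer (by omega) hxs.1]
      simp only [outer, smul_add, Finset.sum_add_distrib]
    · exact .of_notMem_closure (by rwa [isClosed_shell.closure_eq])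
  have hun := hball.union hshell
  rw [closedBall_union_shell hR] at hun
  refine hun.hasFDerivAt (Filter.mem_of_superset (isOpen_ball.mem_nhds ?_) ball_subset_closedBall)
  exact mem_ball_zero_iff.2 (hx.trans_lt hR₁)

end Glue

lemma exists_holderJet_glue [FiniteDimensional ℝ E] {α : ℝ} (hα : α ∈ Set.Icc (0 : ℝ) 1)
    (hR0 : 0 ≤ R) (hR : R ≤ R₂) {R₁ : ℝ} (hR₁ : R₁ < R₂) (n : ℕ) :
    ∀ {F G : Type u} [NormedAddCommGroup F] [NormedSpace ℝ F] [NormedAddCommGroup G]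
      [NormedSpace ℝ G] (L : E → F →L[ℝ] G), ContDiff ℝ ∞ L → (∀ x, R₁ < ‖x‖ → L x = 0) →
      ∀ i, i + n ≤ k → ∃ C ≥ (0 : ℝ), ∀ (v : E → F) (M : ℝ),
        HolderJet α M (closedBall 0 R) n v →
        HolderJet α (C * M) Set.univ n (S.glue L i v) := by
  have hnonneg : ∀ {F : Type u} [NormedAddCommGroup F] {v : E → F} {M : ℝ},
      HolderBound α M v (closedBall 0 R) → 0 ≤ M := fun h =>
    (norm_nonneg _).trans (h.bound 0 (by simpa using hR0))
  induction n with
  | zero =>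
    intro F G _ _ _ _ L hL hL0 i hi
    obtain ⟨C, hC, h⟩ := S.exists_holderBound_glue hα hR hR₁ hL hL0 (i := i) (by omega)
    exact ⟨C, hC, fun v M hv => h v M (hnonneg hv.holderBound) hv⟩
  | succ n ih =>
    intro F G _ _ _ _ L hL hL0 i hi
    obtain ⟨C₀, hC₀, h₀⟩ := S.exists_holderBound_glue hα hR hR₁ hL hL0 (i := i) (by omega)
    obtain ⟨C₁, hC₁, h₁⟩ := ih (derivCoeff L) hL.derivCoeff (derivCoeff_eq_zero hL0) i (by omega)
    obtain ⟨C₂, hC₂, h₂⟩ := ih (postcompCoeff L) hL.postcompCoeff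
      (fun x hx => postcompCoeff_eq_zero (hL0 x hx)) i (by omega)
    obtain ⟨C₃, hC₃, h₃⟩ := ih (reflectCoeff S.ψ L) (S.contDiff.reflectCoeff hL)
      (fun x hx => reflectCoeff_eq_zero (hL0 x hx)) (i + 1) (by omega)
    refine ⟨C₀ + (C₁ + C₂ + C₃), by positivity, fun v M hv => ?_⟩
    have hM := hnonneg hv.holderBound
    have hvn : HolderJet α M (closedBall 0 R) n v := hv.of_succ
    obtain ⟨hv0, v', hv', hv1⟩ := hv
    refine ⟨(h₀ v M hM hv0).mono (by gcongr; linarith [add_nonneg (add_nonneg hC₁ hC₂) hC₃]), _,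
      fun x _ => (S.hasFDerivAt_glue hR hR₁ hL hL0 (by omega) hv' x).hasFDerivWithinAt, ?_⟩
    refine (((h₁ v M hvn).add (h₂ v' M hv1)).add (h₃ v' M hv1)).mono ?_
    rw [← add_mul, ← add_mul]
    exact mul_le_mul_of_nonneg_right (by linarith) hM

/-- The linear extension operator attached to a reflection and a cutoff function `χ`. -/
noncomputable def extend (χ : E → ℝ) : (E → ℝ) →ₗ[ℝ] (E → ℝ) where
  toFun := S.glue (fun x => χ x • ContinuousLinearMap.id ℝ ℝ) 0
  map_add' v w := by
    ext x
    by_cases h : ‖x‖ ≤ R <;>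
      simp [glue, h, outer, reflTerm, mul_add, Finset.sum_add_distrib]
  map_smul' c v := by
    ext x
    by_cases h : ‖x‖ ≤ R
    · simp [glue, h, reflTerm, mul_left_comm]
    · simp [glue, h, outer, reflTerm, mul_left_comm, Finset.mul_sum]

end SphereReflection

lemma exists_extrapolation_weight (k : ℕ) (node : Fin (k + 1) → ℝ)
    (hnode : Function.Injective node) :
    ∃ weight : Fin (k + 1) → ℝ, ∀ i ≤ k, ∑ j, weight j * node j ^ i = 0 ^ i := by
  have hdet : IsUnit (Matrix.vandermonde node) := by
    rw [Matrix.isUnit_iff_isUnit_det, isUnit_iff_ne_zero]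
    exact Matrix.det_vandermonde_ne_zero_iff.2 hnode
  obtain ⟨weight, hw⟩ := (Matrix.vecMul_surjective_iff_isUnit.2 hdet) fun i => 0 ^ (i : ℕ)
  refine ⟨weight, fun i hi => ?_⟩
  simpa [Matrix.vecMul, dotProduct, Matrix.vandermonde_apply] using
    congrFun hw ⟨i, Nat.lt_succ_of_le hi⟩

lemma nonempty_sphereReflection {E : Type*} [NormedAddCommGroup E] [InnerProductSpace ℝ E] (k : ℕ)
    {R R₂ : ℝ} (hR : 0 < R) (hR₂ : R₂ ^ 2 ≤ R ^ 2 * (1 + 1 / (k + 1))) :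
    Nonempty (SphereReflection E k R R₂) := by
  obtain ⟨weight, hw⟩ := exists_extrapolation_weight k (fun j => (j : ℝ) + 1) (fun i j h => by
    simpa [Fin.ext_iff] using h)
  refine ⟨⟨fun x => (‖x‖ ^ 2 / R ^ 2 - 1) • x, fun j => (j : ℝ) + 1, weight, ?_, ?_, ?_, hw⟩⟩
  · exact (((contDiff_norm_sq ℝ).div_const _).sub contDiff_const).smul contDiff_id
  · intro x hx
    simp [hx, hR.ne']
  · intro j x hx hx₂
    set t := ‖x‖ ^ 2 / R ^ 2 - 1 with ht
    have hsq : ‖x‖ ^ 2 = R ^ 2 * (1 + t) := by rw [ht]; field_simp; ring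
    have hR2 : 0 < R ^ 2 := by positivity
    have ht0 : 0 ≤ t := by
      have : R ^ 2 ≤ ‖x‖ ^ 2 := by gcongr
      rw [ht, sub_nonneg, one_le_div hR2]; exact this
    have ht1 : t ≤ 1 / (k + 1) := by
      have : ‖x‖ ^ 2 ≤ R₂ ^ 2 := by gcongr
      have : R ^ 2 * (1 + t) ≤ R ^ 2 * (1 + 1 / (k + 1)) := by linarith
      linarith [le_of_mul_le_mul_left this hR2]
    have hj : (j : ℝ) ≤ k := by exact_mod_cast Nat.lt_succ_iff.1 j.2
    have hjt : ((j : ℝ) + 1) * t ≤ 1 := by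
      calc ((j : ℝ) + 1) * t ≤ (k + 1) * (1 / (k + 1)) := by gcongr
        _ = 1 := by field_simp
    have hjt' : t ≤ ((j : ℝ) + 1) * t := by nlinarith [(Nat.cast_nonneg (j : ℕ) : (0 : ℝ) ≤ j)]
    set a := 1 - ((j : ℝ) + 1) * t with ha
    have he : x - ((j : ℝ) + 1) • t • x = a • x := by
      rw [ha, smul_smul, sub_smul (1 : ℝ), one_smul]
    rw [he, norm_smul, Real.norm_eq_abs, abs_of_nonneg (by linarith)]
    refine abs_le_of_sq_le_sq' ?_ hR.le |>.2
    rw [mul_pow, hsq]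
    have h1 : a ^ 2 * (1 + t) ≤ 1 := by
      have : a ^ 2 ≤ 1 - t := by nlinarith
      nlinarith
    nlinarith

end Reflection

section HolderNorm

variable {d k : ℕ} {α : ℝ} {D : Set (EuclideanSpace ℝ (Fin d))}
  {g : EuclideanSpace ℝ (Fin d) → ℝ}

lemma HolderJet.of_holderNormOn (hD : UniqueDiffOn ℝ D) (hg : ContDiffOn ℝ k g D)
    (hfin : holderNormOn d k α D g < ⊤) :
    HolderJet α (holderNormOn d k α D g).toReal D k g := by
  refine (holderJet_iff hD).2 ⟨hg, fun m hm => ⟨?_, ?_, ?_⟩⟩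
  · exact hg.continuousOn_iteratedFDerivWithin (by exact_mod_cast hm) hD
  · intro x hx
    have h1 : (‖iteratedFDerivWithin ℝ m g D x‖₊ : ℝ≥0∞) ≤ holderNormOn d k α D g := by
      refine le_trans ?_ (Finset.single_le_sum (fun _ _ => zero_le)
        (Finset.mem_range.2 (Nat.lt_succ_of_le hm)))
      exact (le_iSup₂ (f := fun x (_ : x ∈ D) =>
        (‖iteratedFDerivWithin ℝ m g D x‖₊ : ℝ≥0∞)) x hx).trans le_self_add
    simpa using ENNReal.toReal_mono hfin.ne h1
  · intro x hx y hy
    rcases eq_or_ne x y with rfl | hxy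
    · simp only [sub_self, norm_zero]; positivity
    have hpos : 0 < ‖x - y‖ ^ α := Real.rpow_pos_of_pos (norm_pos_iff.2 (sub_ne_zero.2 hxy)) _
    have h1 : (‖iteratedFDerivWithin ℝ m g D x - iteratedFDerivWithin ℝ m g D y‖₊ : ℝ≥0∞) /
        ENNReal.ofReal (‖x - y‖ ^ α) ≤ holderNormOn d k α D g := by
      refine le_trans ?_ (Finset.single_le_sum (fun _ _ => zero_le)
        (Finset.mem_range.2 (Nat.lt_succ_of_le hm)))
      refine le_trans ?_ le_add_self
      exact le_iSup₂_of_le x hx (le_iSup₂_of_le y hy (le_iSup_of_le hxy le_rfl))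
    rw [ENNReal.div_le_iff (by simpa using hpos) ENNReal.ofReal_ne_top] at h1
    have h2 := ENNReal.toReal_mono (ENNReal.mul_ne_top hfin.ne ENNReal.ofReal_ne_top) h1
    simpa [ENNReal.toReal_mul, ENNReal.toReal_ofReal hpos.le] using h2

lemma HolderJet.holderNormOn_le (hD : UniqueDiffOn ℝ D) {M : ℝ} (h : HolderJet α M D k g) :
    holderNormOn d k α D g ≤ ENNReal.ofReal (2 * (k + 1)) * ENNReal.ofReal M := by
  obtain ⟨-, h⟩ := (holderJet_iff hD).1 h
  have hterm : ∀ m ∈ Finset.range (k + 1),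
      ((⨆ x ∈ D, (‖iteratedFDerivWithin ℝ m g D x‖₊ : ℝ≥0∞)) +
      ⨆ (x ∈ D) (y ∈ D) (_ : x ≠ y),
        (‖iteratedFDerivWithin ℝ m g D x - iteratedFDerivWithin ℝ m g D y‖₊ : ℝ≥0∞) /
          ENNReal.ofReal (‖x - y‖ ^ α)) ≤ 2 * ENNReal.ofReal M := by
    intro m hm
    obtain ⟨-, h1, h2⟩ := h m (Nat.lt_succ_iff.1 (Finset.mem_range.1 hm))
    rw [two_mul]
    refine add_le_add (iSup₂_le fun x hx => ?_)
      (iSup₂_le fun x hx => iSup₂_le fun y hy => iSup_le fun hxy => ?_)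
    · rw [← enorm_eq_nnnorm, ← ofReal_norm]
      exact ENNReal.ofReal_le_ofReal (h1 x hx)
    · have hpos : 0 < ‖x - y‖ ^ α := Real.rpow_pos_of_pos (norm_pos_iff.2 (sub_ne_zero.2 hxy)) _
      rw [ENNReal.div_le_iff (by simpa using hpos) ENNReal.ofReal_ne_top,
        ← ENNReal.ofReal_mul' hpos.le, ← enorm_eq_nnnorm, ← ofReal_norm]
      exact ENNReal.ofReal_le_ofReal (h2 x hx y hy)
  refine (Finset.sum_le_sum hterm).trans (le_of_eq ?_)
  rw [Finset.sum_const, Finset.card_range, nsmul_eq_mul, ← mul_assoc,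
    ENNReal.ofReal_mul (by norm_num)]
  congr 1
  rw [mul_comm]
  congr 1
  · simp
  · rw [← Nat.cast_add_one, ENNReal.ofReal_natCast]

end HolderNorm

/-- Stein-type extension theorem for Hölder spaces: there is a linear extension operator
`E : C^{k,α}(B̄_R(0)) → C^{k,α}_c(ℝᵈ)` with image supported in `B̄_{R+b/2}(0)` and
`‖E(w)‖_{C^{k,α}(ℝᵈ)} ≤ C‖w‖_{C^{k,α}(B̄_R(0))}`. -/
theorem holder_extension_theorem
    (d k : ℕ) (hd : 1 ≤ d) (α R : ℝ) (hα : α ∈ Set.Icc (0 : ℝ) 1) (hR : 0 < R) :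
    ∃ b > (0 : ℝ), ∃ C > (0 : ℝ),
      ∃ E : (EuclideanSpace ℝ (Fin d) → ℝ) →ₗ[ℝ] (EuclideanSpace ℝ (Fin d) → ℝ),
        ∀ w : EuclideanSpace ℝ (Fin d) → ℝ,
          ContDiffOn ℝ k w (closedBall 0 R) →
          holderNormOn d k α (closedBall 0 R) w < ⊤ →
          (∀ x ∈ closedBall (0 : EuclideanSpace ℝ (Fin d)) R, E w x = w x) ∧
          (∀ x ∉ closedBall (0 : EuclideanSpace ℝ (Fin d)) (R + b / 2), E w x = 0) ∧
          ContDiff ℝ k (E w) ∧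
          holderNormOn d k α Set.univ (E w) ≤
            ENNReal.ofReal C * holderNormOn d k α (closedBall 0 R) w := by
  let V := EuclideanSpace ℝ (Fin d)
  set b : ℝ := R / (3 * (k + 1)) with hb
  have hb0 : 0 < b := by positivity
  have hk : (0 : ℝ) < k + 1 := by positivity
  have hR₂ : (R + b) ^ 2 ≤ R ^ 2 * (1 + 1 / (k + 1)) := by
    set t : ℝ := 1 / (k + 1) with ht
    have hbt : b = R * (t / 3) := by rw [hb, ht]; field_simp
    have ht0 : 0 ≤ t := by positivity
    have ht1 : t ≤ 1 := by rw [ht, div_le_one hk]; linarith [(Nat.cast_nonneg k : (0 : ℝ) ≤ k)]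
    have h1 : (1 + t / 3) ^ 2 ≤ 1 + t := by nlinarith
    calc (R + b) ^ 2 = R ^ 2 * (1 + t / 3) ^ 2 := by rw [hbt]; ring
      _ ≤ R ^ 2 * (1 + t) := by gcongr
  obtain ⟨S⟩ := nonempty_sphereReflection (E := V) k hR hR₂
  let χ : ContDiffBump (0 : V) := ⟨R, R + b / 2, hR, by linarith⟩
  have hχ0 : ∀ x : V, R + b / 2 < ‖x‖ → χ x = 0 := fun x hx =>
    χ.zero_of_le_dist (by simpa using hx.le)
  have hχ : ContDiff ℝ ∞ fun x : V => χ x • ContinuousLinearMap.id ℝ ℝ :=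
    χ.contDiff.smul contDiff_const
  obtain ⟨C, hC, hjet⟩ := S.exists_holderJet_glue hα hR.le (by linarith : R ≤ R + b)
    (by linarith : R + b / 2 < R + b) k _ hχ (fun x hx => by simp [hχ0 x hx]) 0 (by omega)
  refine ⟨b, hb0, 2 * (k + 1) * (C + 1), by positivity, S.extend χ, fun w hw hfin => ?_⟩
  have hD : UniqueDiffOn ℝ (closedBall (0 : V) R) :=
    uniqueDiffOn_convex (convex_closedBall _ _) (by
      rw [interior_closedBall _ hR.ne']; exact nonempty_ball.2 hR)
  have hE := hjet w _ (HolderJet.of_holderNormOn hD hw hfin)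
  refine ⟨fun x hx => ?_, fun x hx => ?_, ?_, ?_⟩
  · refine (S.glue_eqOn_ball hx).trans ?_
    simp [reflTerm, χ.one_of_mem_closedBall hx]
  · refine S.glue_eq_zero ?_
    simp [hχ0 x (by simpa using hx)]
  · exact contDiffOn_univ.1 ((holderJet_iff uniqueDiffOn_univ).1 hE).1
  · refine (hE.holderNormOn_le uniqueDiffOn_univ).trans ?_
    rw [ENNReal.ofReal_mul hC, ENNReal.ofReal_toReal hfin.ne,
      ENNReal.ofReal_mul (by positivity : (0 : ℝ) ≤ 2 * (k + 1)), mul_assoc]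
    gcongr
    linarith
end
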